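/- arXiv:0907.5030 — 2 statements merged into one kernel-verified Lean document; each statement's English description precedes it below -/
import Mathlib

section
/- There exists a finite ground set X and an Ingletonian polymatroid (X, h) that is not cc-representable, i.e., h does not lie in the closure of the convex cone generated by the set Υ[X] of representable rank functions on X. Consequently, there exist linear inequalities satisfied by all representable polymatroids on X that are not implied by the polymatroid axioms together with Ingleton's inequalities. -/
open Module Filter Topology

/-- A representation of a rank function on ground set `X` by subspaces of a
finite-dimensional vector space `W` over a finite field `F`. -/
structure SubspaceRep {X : Type} (h : Finset X → ℝ) where
  F : Type
  W : Type
  [fieldF : Field F]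
  [fintypeF : Fintype F]
  [addCommGroupW : AddCommGroup W]
  [moduleW : Module F W]
  [finiteDimensionalW : FiniteDimensional F W]
  V : X → Submodule F W
  rank_eq : ∀ A : Finset X, h A = (Module.finrank F ↥(A.sup V) : ℝ)

/-- `h` is representable: it is `q`-representable for some prime power `q`
(equivalently, it is given by subspace dimensions over some finite field). -/
def IsRepresentable {X : Type} (h : Finset X → ℝ) : Prop := Nonempty (SubspaceRep h)

/-- `h` is even representable: `2^m`-representable for some positive integer `m`. -/
def EvenRepresentable {X : Type} (h : Finset X → ℝ) : Prop :=
  ∃ (r : SubspaceRep h) (m : ℕ), 0 < m ∧ Nat.card r.F = 2 ^ m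

/-- `h` is odd representable: `p^m`-representable for some odd prime `p` and positive `m`. -/
def OddRepresentable {X : Type} (h : Finset X → ℝ) : Prop :=
  ∃ (r : SubspaceRep h) (p m : ℕ), p.Prime ∧ Odd p ∧ 0 < m ∧ Nat.card r.F = p ^ m

/-- Polymatroid axioms: normalization, nonnegativity, monotonicity, submodularity. -/
def IsPolymatroid {X : Type} [DecidableEq X] (h : Finset X → ℝ) : Prop :=
  h ∅ = 0 ∧ (∀ A, 0 ≤ h A) ∧ (∀ A B : Finset X, A ⊆ B → h A ≤ h B) ∧
    ∀ A B : Finset X, h (A ∪ B) + h (A ∩ B) ≤ h A + h B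

/-- The Ingleton expression `J_h(A1,A2,A3,A4)`. -/
noncomputable def ingletonJ {X : Type} [DecidableEq X] (h : Finset X → ℝ)
    (A1 A2 A3 A4 : Finset X) : ℝ :=
  h (A1 ∪ A2) + h (A1 ∪ A3) + h (A1 ∪ A4) + h (A2 ∪ A3) + h (A2 ∪ A4)
    - h A1 - h A2 - h (A3 ∪ A4) - h (A1 ∪ A2 ∪ A3) - h (A1 ∪ A2 ∪ A4)

/-- `h` is Ingletonian if all Ingleton expressions are nonnegative. -/
def IsIngletonian {X : Type} [DecidableEq X] (h : Finset X → ℝ) : Prop :=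
  ∀ A1 A2 A3 A4 : Finset X, 0 ≤ ingletonJ h A1 A2 A3 A4

/-- The convex cone generated by a set `S` of rank functions (viewed as points of
`ℝ^{2^|X|}`): all finite nonnegative combinations of elements of `S`. -/
def coneHull {X : Type} (S : Set (Finset X → ℝ)) : Set (Finset X → ℝ) :=
  {x | ∃ (m : ℕ) (c : Fin m → ℝ) (f : Fin m → Finset X → ℝ),
    (∀ i, 0 ≤ c i) ∧ (∀ i, f i ∈ S) ∧ x = ∑ i, c i • f i}

/-- `h` is almost representable: a coordinatewise limit `h = lim_i c_i g_i` with
`c_i > 0` and each `g_i` representable. -/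
def AlmostRepresentable {X : Type} (h : Finset X → ℝ) : Prop :=
  ∃ (g : ℕ → Finset X → ℝ) (c : ℕ → ℝ), (∀ i, IsRepresentable (g i)) ∧
    (∀ i, 0 < c i) ∧ ∀ A : Finset X, Tendsto (fun i => c i * g i A) atTop (𝓝 (h A))

/-- `h` is almost even representable. -/
def AlmostEvenRepresentable {X : Type} (h : Finset X → ℝ) : Prop :=
  ∃ (g : ℕ → Finset X → ℝ) (c : ℕ → ℝ), (∀ i, EvenRepresentable (g i)) ∧
    (∀ i, 0 < c i) ∧ ∀ A : Finset X, Tendsto (fun i => c i * g i A) atTop (𝓝 (h A))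

/-- `h` is almost odd representable. -/
def AlmostOddRepresentable {X : Type} (h : Finset X → ℝ) : Prop :=
  ∃ (g : ℕ → Finset X → ℝ) (c : ℕ → ℝ), (∀ i, OddRepresentable (g i)) ∧
    (∀ i, 0 < c i) ∧ ∀ A : Finset X, Tendsto (fun i => c i * g i A) atTop (𝓝 (h A))

/-- `h` is cc-representable: it lies in the closure of the convex cone generated by
the set `Υ[X]` of representable rank functions on `X`. -/
def CcRepresentable {X : Type} (h : Finset X → ℝ) : Prop :=
  h ∈ closure (coneHull {g : Finset X → ℝ | IsRepresentable g})

/-- A matroid: an integer-valued polymatroid with `h(A) ≤ |A|`. -/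
def IsIntMatroid {X : Type} [DecidableEq X] (h : Finset X → ℝ) : Prop :=
  IsPolymatroid h ∧ (∀ A : Finset X, ∃ z : ℤ, h A = (z : ℝ)) ∧ ∀ A : Finset X, h A ≤ A.card

/-- A circuit of a matroid: a minimal dependent set. -/
def IsCircuit {X : Type} (h : Finset X → ℝ) (C : Finset X) : Prop :=
  h C < C.card ∧ ∀ D : Finset X, D ⊂ C → h D = D.card

/-- A connected matroid: every pair of distinct elements lies in a common circuit. -/
def IsConnectedMatroid {X : Type} [DecidableEq X] (h : Finset X → ℝ) : Prop :=
  IsIntMatroid h ∧ ∀ x y : X, x ≠ y → ∃ C : Finset X, IsCircuit h C ∧ x ∈ C ∧ y ∈ C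

/-! ### The subspace inequality -/

theorem finrank_sub {F W : Type} [Field F] [AddCommGroup W] [Module F W] [FiniteDimensional F W]
    (X Y T U : Submodule F W) (hX : T ≤ X) (hY : T ≤ Y) (hU : U ≤ X ⊔ Y) :
    (finrank F U : ℝ) + finrank F T ≤ finrank F X + finrank F Y := by
  have h1 := Submodule.finrank_sup_add_finrank_inf_eq X Y
  have h2 := Submodule.finrank_mono (le_inf hX hY)
  have h3 := Submodule.finrank_mono hU
  exact_mod_cast (by omega : finrank F U + finrank F T ≤ finrank F X + finrank F Y)

theorem subspace_ineq {F W : Type} [Field F] [AddCommGroup W] [Module F W]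
    [FiniteDimensional F W] (A B C D E : Submodule F W) :
    (0 : ℝ) ≤ finrank F ↥(A ⊔ C) + finrank F ↥(B ⊔ C) - finrank F ↥(A ⊔ (B ⊔ C)) - finrank F C
      + finrank F ↥(A ⊔ D) + finrank F ↥(B ⊔ D) - finrank F ↥(A ⊔ (B ⊔ D)) - finrank F D
      + finrank F ↥(C ⊔ E) + finrank F ↥(D ⊔ E) - finrank F ↥(C ⊔ (D ⊔ E))
      - finrank F ↥(A ⊔ E) - finrank F B + finrank F ↥(A ⊔ B) := by
  have h0 : (finrank F ↥(A ⊔ B) : ℝ) + finrank F ↥(A ⊓ B) = finrank F A + finrank F B := by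
    exact_mod_cast Submodule.finrank_sup_add_finrank_inf_eq A B
  have hA : A ⊓ B ≤ A := inf_le_left
  have hB : A ⊓ B ≤ B := inf_le_right
  generalize A ⊓ B = Z at *
  have h1 := finrank_sub (A ⊔ C) (B ⊔ C) (Z ⊔ C) (A ⊔ (B ⊔ C))
    (sup_le_sup_right hA _) (sup_le_sup_right hB _)
    (sup_le (le_sup_of_le_left le_sup_left) le_sup_right)
  have h2 := finrank_sub (A ⊔ D) (B ⊔ D) (Z ⊔ D) (A ⊔ (B ⊔ D))
    (sup_le_sup_right hA _) (sup_le_sup_right hB _)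
    (sup_le (le_sup_of_le_left le_sup_left) le_sup_right)
  have h3 := finrank_sub A (Z ⊔ E) Z (A ⊔ E) hA le_sup_left
    (sup_le_sup_left le_sup_right _)
  have h4 := finrank_sub (Z ⊔ (C ⊔ E)) (Z ⊔ (D ⊔ E)) (Z ⊔ E) (C ⊔ (D ⊔ E))
    (sup_le_sup_left le_sup_right _) (sup_le_sup_left le_sup_right _)
    (sup_le (le_sup_of_le_left (le_sup_of_le_right le_sup_left))
      (le_sup_of_le_right le_sup_right))
  have h5 := finrank_sub (Z ⊔ C) (C ⊔ E) C (Z ⊔ (C ⊔ E)) le_sup_right le_sup_left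
    (sup_le_sup_right le_sup_left _)
  have h6 := finrank_sub (Z ⊔ D) (D ⊔ E) D (Z ⊔ (D ⊔ E)) le_sup_right le_sup_left
    (sup_le_sup_right le_sup_left _)
  linarith

/-- Coefficients of the linear rank inequality
`I(A;B) ≤ I(A;B|C) + I(A;B|D) + I(C;D|E) + I(A;E)`. -/
noncomputable def coef (S : Finset (Fin 5)) : ℝ :=
  (if S = {0, 2} then 1 else 0) + (if S = {1, 2} then 1 else 0)
  + (if S = {0, 1, 2} then -1 else 0) + (if S = {2} then -1 else 0)
  + (if S = {0, 3} then 1 else 0) + (if S = {1, 3} then 1 else 0)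
  + (if S = {0, 1, 3} then -1 else 0) + (if S = {3} then -1 else 0)
  + (if S = {2, 4} then 1 else 0) + (if S = {3, 4} then 1 else 0)
  + (if S = {2, 3, 4} then -1 else 0) + (if S = {0, 4} then -1 else 0)
  + (if S = {1} then -1 else 0) + (if S = {0, 1} then 1 else 0)

theorem sum_coef (g : Finset (Fin 5) → ℝ) :
    ∑ S : Finset (Fin 5), coef S * g S =
      g {0, 2} + g {1, 2} - g {0, 1, 2} - g {2} + g {0, 3} + g {1, 3} - g {0, 1, 3} - g {3}
      + g {2, 4} + g {3, 4} - g {2, 3, 4} - g {0, 4} - g {1} + g {0, 1} := by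
  simp only [coef, add_mul, Finset.sum_add_distrib, ite_mul, zero_mul, Finset.sum_ite_eq',
    Finset.mem_univ, if_true]
  ring

theorem coef_nonneg (g : Finset (Fin 5) → ℝ) (hg : IsRepresentable g) :
    0 ≤ ∑ S : Finset (Fin 5), coef S * g S := by
  obtain ⟨⟨F, W, V, hr⟩⟩ := hg
  rw [sum_coef]
  have h1 : ∀ i, g {i} = (finrank F ↥(V i) : ℝ) := fun i => by
    rw [hr, Finset.sup_singleton]
  have h2 : ∀ i j, g {i, j} = (finrank F ↥(V i ⊔ V j) : ℝ) := fun i j => by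
    rw [hr, Finset.sup_insert, Finset.sup_singleton]
  have h3 : ∀ i j k, g {i, j, k} = (finrank F ↥(V i ⊔ (V j ⊔ V k)) : ℝ) := fun i j k => by
    rw [hr, Finset.sup_insert, Finset.sup_insert, Finset.sup_singleton]
  simp only [h1, h2, h3]
  exact subspace_ineq (V 0) (V 1) (V 2) (V 3) (V 4)

/-! ### The polymatroid -/

/-- Rank table indexed by bit masks, packed in base 8. -/
def rk (m : ℕ) : ℕ := (56591539845342170588912957648 >>> (3 * m)) % 8

/-- Closure table indexed by bit masks, packed in base 32. -/
def clo (m : ℕ) : ℕ := (1461501637321586219961363592196696514707840927776 >>> (5 * m)) % 32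

/-- Masks of the closed sets. -/
def flats : List ℕ := [0, 1, 2, 3, 8, 9, 10, 16, 20, 21, 22, 24, 31]

/-- Bounded universal check. -/
def allBelow : ℕ → (ℕ → Bool) → Bool
  | 0, _ => true
  | n + 1, p => p n && allBelow n p

theorem allBelow_spec {n : ℕ} {p : ℕ → Bool} (h : allBelow n p = true) :
    ∀ m < n, p m = true := by
  induction n with
  | zero => intro m hm; omega
  | succ k ih =>
    simp only [allBelow, Bool.and_eq_true] at h
    intro m hm
    rcases Nat.lt_succ_iff_lt_or_eq.mp hm with h1 | h1
    · exact ih h.2 m h1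
    · rw [h1]; exact h.1

theorem clo_check : allBelow 32 (fun a => flats.elem (clo a) && allBelow 32 (fun b =>
    Nat.beq (rk (a ||| b)) (rk (clo a ||| b)))) = true := by decide +kernel

theorem poly_check : allBelow 32 (fun a => allBelow 32 (fun b =>
    Nat.ble (rk a) (rk (a ||| b)) &&
      Nat.ble (rk (a ||| b) + rk (a &&& b)) (rk a + rk b))) = true := by decide +kernel

/-- The Ingleton inequality for masks. -/
def ingOK (a b c d : ℕ) : Bool :=
  Nat.ble (rk a + rk b + rk (c ||| d) + rk (a ||| b ||| c) + rk (a ||| b ||| d))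
    (rk (a ||| b) + rk (a ||| c) + rk (a ||| d) + rk (b ||| c) + rk (b ||| d))

theorem ing_check : flats.all (fun a => flats.all (fun b => flats.all (fun c =>
    flats.all (fun d => ingOK a b c d)))) = true := by decide +kernel

theorem clo_mem {a : ℕ} (ha : a < 32) : clo a ∈ flats := by
  have h := allBelow_spec clo_check a ha
  simp only [Bool.and_eq_true] at h
  exact List.elem_iff.mp h.1

theorem rk_clo {a b : ℕ} (ha : a < 32) (hb : b < 32) : rk (clo a ||| b) = rk (a ||| b) := by
  have h := allBelow_spec clo_check a ha
  simp only [Bool.and_eq_true] at h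
  exact (Nat.eq_of_beq_eq_true (allBelow_spec h.2 b hb)).symm

theorem lor_lt {a b : ℕ} (ha : a < 32) (hb : b < 32) : a ||| b < 32 :=
  Nat.or_lt_two_pow (n := 5) ha hb

theorem clo_lt (a : ℕ) : clo a < 32 := Nat.mod_lt _ (by norm_num)

theorem rk_clo1 {a : ℕ} (ha : a < 32) : rk (clo a) = rk a := by
  simpa using rk_clo ha (b := 0) (by norm_num)

theorem rk_clo2 {a b : ℕ} (ha : a < 32) (hb : b < 32) :
    rk (clo a ||| clo b) = rk (a ||| b) := by
  rw [rk_clo ha (clo_lt b), Nat.or_comm, rk_clo hb ha, Nat.or_comm]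

theorem rk_clo3 {a b c : ℕ} (ha : a < 32) (hb : b < 32) (hc : c < 32) :
    rk (clo a ||| clo b ||| clo c) = rk (a ||| b ||| c) := by
  rw [Nat.or_comm _ (clo c), rk_clo hc (lor_lt (clo_lt a) (clo_lt b)),
    Nat.or_comm c, Nat.or_assoc, rk_clo ha (lor_lt (clo_lt b) hc), Nat.or_comm a,
    Nat.or_assoc, rk_clo hb (lor_lt hc ha)]
  congr 1
  rw [← Nat.or_assoc, Nat.or_comm]
  exact (Nat.or_assoc _ _ _).symm

theorem rk_ing {a b c d : ℕ} (ha : a < 32) (hb : b < 32) (hc : c < 32) (hd : d < 32) :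
    rk a + rk b + rk (c ||| d) + rk (a ||| b ||| c) + rk (a ||| b ||| d) ≤
    rk (a ||| b) + rk (a ||| c) + rk (a ||| d) + rk (b ||| c) + rk (b ||| d) := by
  have h := ing_check
  simp only [List.all_eq_true] at h
  have h1 := Nat.le_of_ble_eq_true
    (h _ (clo_mem ha) _ (clo_mem hb) _ (clo_mem hc) _ (clo_mem hd))
  simpa only [rk_clo1 ha, rk_clo1 hb, rk_clo2 ha hb, rk_clo2 ha hc, rk_clo2 ha hd,
    rk_clo2 hb hc, rk_clo2 hb hd, rk_clo2 hc hd, rk_clo3 ha hb hc, rk_clo3 ha hb hd] using h1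

/-- Mask of five booleans. -/
def bmask (a b c d e : Bool) : ℕ :=
  a.toNat + 2 * b.toNat + 4 * c.toNat + 8 * d.toNat + 16 * e.toNat

theorem bmask_or : ∀ a b c d e a' b' c' d' e' : Bool,
    bmask (a || a') (b || b') (c || c') (d || d') (e || e') =
      bmask a b c d e ||| bmask a' b' c' d' e' := by decide +kernel

theorem bmask_and : ∀ a b c d e a' b' c' d' e' : Bool,
    bmask (a && a') (b && b') (c && c') (d && d') (e && e') =
      bmask a b c d e &&& bmask a' b' c' d' e' := by decide +kernel

theorem bmask_lt : ∀ a b c d e : Bool, bmask a b c d e < 32 := by decide +kernel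

/-- Mask of a subset of the ground set. -/
def mask (S : Finset (Fin 5)) : ℕ :=
  bmask (decide (0 ∈ S)) (decide (1 ∈ S)) (decide (2 ∈ S)) (decide (3 ∈ S)) (decide (4 ∈ S))

theorem mask_union (S T : Finset (Fin 5)) : mask (S ∪ T) = mask S ||| mask T := by
  simp only [mask, Finset.mem_union, Bool.decide_or, bmask_or]

theorem mask_inter (S T : Finset (Fin 5)) : mask (S ∩ T) = mask S &&& mask T := by
  simp only [mask, Finset.mem_inter, Bool.decide_and, bmask_and]

theorem mask_lt (S : Finset (Fin 5)) : mask S < 32 := bmask_lt _ _ _ _ _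

/-- The Ingletonian polymatroid that is not cc-representable. -/
def hh (S : Finset (Fin 5)) : ℝ := (rk (mask S) : ℝ)

theorem hh_polymatroid : IsPolymatroid hh := by
  have key : ∀ A B : Finset (Fin 5), rk (mask A) ≤ rk (mask (A ∪ B)) ∧
      rk (mask (A ∪ B)) + rk (mask (A ∩ B)) ≤ rk (mask A) + rk (mask B) := by
    intro A B
    have h := allBelow_spec (allBelow_spec poly_check _ (mask_lt A)) _ (mask_lt B)
    simp only [Bool.and_eq_true] at h
    rw [mask_union, mask_inter]
    exact ⟨Nat.le_of_ble_eq_true h.1, Nat.le_of_ble_eq_true h.2⟩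
  refine ⟨?_, fun A => Nat.cast_nonneg _, fun A B hAB => ?_, fun A B => ?_⟩
  · have : rk (mask ∅) = 0 := by decide +kernel
    simp [hh, this]
  · have := (key A B).1
    rw [Finset.union_eq_right.mpr hAB] at this
    exact Nat.cast_le.mpr this
  · unfold hh
    exact_mod_cast (key A B).2

theorem hh_ingletonian : IsIngletonian hh := by
  intro A B C D
  have h := rk_ing (mask_lt A) (mask_lt B) (mask_lt C) (mask_lt D)
  simp only [ingletonJ, hh, mask_union]
  have h' : ((rk (mask A) + rk (mask B) + rk (mask C ||| mask D) + rk (mask A ||| mask B ||| mask C)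
      + rk (mask A ||| mask B ||| mask D) : ℕ) : ℝ) ≤ _ := Nat.cast_le.mpr h
  push_cast at h'
  linarith

theorem hh_neg : ∑ S : Finset (Fin 5), coef S * hh S < 0 := by
  rw [sum_coef]
  have h : rk (mask {0, 2}) = 4 ∧ rk (mask {1, 2}) = 4 ∧ rk (mask {0, 1, 2}) = 5 ∧
      rk (mask {2}) = 3 ∧ rk (mask {0, 3}) = 4 ∧ rk (mask {1, 3}) = 4 ∧
      rk (mask {0, 1, 3}) = 5 ∧ rk (mask {3}) = 3 ∧ rk (mask {2, 4}) = 3 ∧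
      rk (mask {3, 4}) = 4 ∧ rk (mask {2, 3, 4}) = 5 ∧ rk (mask {0, 4}) = 4 ∧
      rk (mask {1}) = 3 ∧ rk (mask {0, 1}) = 4 := by decide +kernel
  obtain ⟨h1, h2, h3, h4, h5, h6, h7, h8, h9, h10, h11, h12, h13, h14⟩ := h
  simp only [hh, h1, h2, h3, h4, h5, h6, h7, h8, h9, h10, h11, h12, h13, h14]
  norm_num

theorem cc_nonneg {n : ℕ} (c : Finset (Fin n) → ℝ)
    (hc : ∀ g : Finset (Fin n) → ℝ, IsRepresentable g → 0 ≤ ∑ A, c A * g A)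
    (h : Finset (Fin n) → ℝ) (hcc : CcRepresentable h) : 0 ≤ ∑ A, c A * h A := by
  have hcl : IsClosed {x : Finset (Fin n) → ℝ | 0 ≤ ∑ A, c A * x A} :=
    isClosed_le continuous_const (by fun_prop)
  refine closure_minimal ?_ hcl hcc
  rintro x ⟨m, a, f, ha, hf, rfl⟩
  have : ∑ A, c A * (∑ i, a i • f i) A = ∑ i, a i * ∑ A, c A * f i A := by
    simp only [Finset.sum_apply, Pi.smul_apply, smul_eq_mul, Finset.mul_sum]
    rw [Finset.sum_comm]
    exact Finset.sum_congr rfl fun i _ => Finset.sum_congr rfl fun A _ => by ring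
  simp only [Set.mem_ofPred_eq, this]
  exact Finset.sum_nonneg fun i _ => mul_nonneg (ha i) (hc _ (hf i))

/-- insufficiency of Ingleton's inequalities: there is a finite ground
set and an Ingletonian polymatroid on it that is not cc-representable; consequently
there is a linear inequality valid for all representable polymatroids on that ground
set which is violated by this Ingletonian polymatroid (hence not implied by the
polymatroid axioms together with Ingleton's inequalities). -/
theorem exists_ingletonian_not_cc_representable :
    ∃ (n : ℕ) (h : Finset (Fin n) → ℝ),
      IsPolymatroid h ∧ IsIngletonian h ∧ ¬ CcRepresentable h ∧
      ∃ c : Finset (Fin n) → ℝ,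
        (∀ g : Finset (Fin n) → ℝ, IsRepresentable g →
          0 ≤ ∑ A : Finset (Fin n), c A * g A) ∧
        ∑ A : Finset (Fin n), c A * h A < 0 := by
  exact ⟨5, hh, hh_polymatroid, hh_ingletonian,
    fun hcc => absurd (cc_nonneg coef coef_nonneg hh hcc) (not_le.mpr hh_neg),
    coef, coef_nonneg, hh_neg⟩
end

section
/- Let Z_1,…,Z_5, V_1,…,V_8 be subspaces of a finite-dimensional vector space over a finite field of characteristic 2 satisfying: dim⟨Z_1,…,Z_5⟩ = ∑_{i=1}^5 dim Z_i; V_1 ⊆ ⟨Z_1,Z_2,Z_3⟩; V_2 ⊆ ⟨Z_3,Z_4,Z_5⟩; V_3 ⊆ ⟨Z_1,Z_2⟩; V_4 ⊆ ⟨Z_1,Z_3⟩; V_5 ⊆ ⟨Z_2,Z_3⟩; V_6 ⊆ ⟨Z_3,Z_4⟩; V_7 ⊆ ⟨Z_3,Z_5⟩; V_8 ⊆ ⟨Z_4,Z_5⟩; Z_1 ⊆ ⟨V_1,V_5⟩; Z_2 ⊆ ⟨V_1,V_4⟩; Z_3 ⊆ ⟨V_1,V_3⟩; Z_3 ⊆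 ⟨V_3,V_4,V_5,V_6,V_7,V_8⟩; Z_3 ⊆ ⟨V_2,V_8⟩; Z_4 ⊆ ⟨V_2,V_7⟩; and Z_5 ⊆ ⟨V_2,V_6⟩. Then 11·min(dim Z_1,…,dim Z_5) ≤ 10·max(dim V_1,…,dim V_8). -/
open Module

section aux
variable {K M : Type} [Field K] [AddCommGroup M] [Module K M] [FiniteDimensional K M]

theorem dfz_rank_nullity (f : M →ₗ[K] M) (S : Submodule K M) :
    finrank K ↥(S.map f) + finrank K ↥(S ⊓ LinearMap.ker f) = finrank K ↥S := by
  have h := LinearMap.finrank_range_add_finrank_ker (f.domRestrict S)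
  rw [LinearMap.range_domRestrict, LinearMap.ker_domRestrict] at h
  rw [← h]
  congr 1
  have := (Submodule.finrank_map_subtype_eq S ((LinearMap.ker f).comap S.subtype))
  rw [Submodule.map_comap_subtype] at this
  exact this

theorem dfz_map_mono (f : M →ₗ[K] M) (S T : Submodule K M) (h : S ≤ T) :
    finrank K ↥S + finrank K ↥(T.map f) ≤ finrank K ↥(S.map f) + finrank K ↥T := by
  have h1 := dfz_rank_nullity f S
  have h2 := dfz_rank_nullity f T
  have h3 : finrank K ↥(S ⊓ LinearMap.ker f) ≤ finrank K ↥(T ⊓ LinearMap.ker f) :=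
    Submodule.finrank_mono (inf_le_inf_right _ h)
  omega

theorem dfz_exists_proj (Z W : Submodule K M) (h : Disjoint Z W) :
    ∃ p : M →ₗ[K] M, (∀ x ∈ Z, p x = x) ∧ (∀ x ∈ W, p x = 0) := by
  obtain ⟨C, hWC, hC⟩ := h.symm.exists_isCompl
  exact ⟨Submodule.projection Z C hC.symm,
    fun x hx => Submodule.projection_apply_of_mem_left hC.symm hx,
    fun x hx => (Submodule.projection_apply_eq_zero_iff hC.symm).2 (hWC hx)⟩

theorem dfz_disjoint (A B : Submodule K M)
    (h : finrank K ↥A + finrank K ↥B ≤ finrank K ↥(A ⊔ B)) : Disjoint A B := by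
  have h1 := Submodule.finrank_sup_add_finrank_inf_eq A B
  rw [disjoint_iff, ← Submodule.finrank_eq_zero (R := K)]
  omega

theorem dfz_half [CharP K 2] (Z1 Z2 Z3 V1 V3 V4 V5 : Submodule K M)
    (hind : finrank K ↥Z1 + finrank K ↥Z2 + finrank K ↥Z3 ≤ finrank K ↥(Z1 ⊔ Z2 ⊔ Z3))
    (hV1 : V1 ≤ Z1 ⊔ Z2 ⊔ Z3)
    (hV3 : V3 ≤ Z1 ⊔ Z2) (hV4 : V4 ≤ Z1 ⊔ Z3) (hV5 : V5 ≤ Z2 ⊔ Z3)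
    (hZ1 : Z1 ≤ V1 ⊔ V5) (hZ2 : Z2 ≤ V1 ⊔ V4) (hZ3 : Z3 ≤ V1 ⊔ V3) :
    finrank K ↥((V3 ⊔ V4 ⊔ V5) ⊓ Z3) + 2 * finrank K ↥Z1 + 2 * finrank K ↥Z2 + finrank K ↥Z3
      ≤ 2 * finrank K ↥V1 + finrank K ↥V3 + finrank K ↥V4 + finrank K ↥V5 := by
  have hneg : ∀ x : M, x + x = 0 := fun x => by
    rw [← two_smul K x, CharTwo.two_eq_zero, zero_smul]
  have e12 := Submodule.finrank_add_le_finrank_add_finrank Z1 Z2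
  have e13 := Submodule.finrank_add_le_finrank_add_finrank Z1 Z3
  have e23 := Submodule.finrank_add_le_finrank_add_finrank Z2 Z3
  obtain ⟨p1, p11, p1w⟩ := dfz_exists_proj Z1 (Z2 ⊔ Z3) (dfz_disjoint _ _ (by
    rw [← sup_assoc]; omega))
  obtain ⟨p2, p22, p2w⟩ := dfz_exists_proj Z2 (Z1 ⊔ Z3) (dfz_disjoint _ _ (by
    rw [← sup_assoc, sup_comm Z2]; omega))
  obtain ⟨p3, p33, p3w⟩ := dfz_exists_proj Z3 (Z1 ⊔ Z2) (dfz_disjoint _ _ (by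
    rw [sup_comm Z3]; omega))
  have p12 : ∀ x ∈ Z2, p1 x = 0 := fun x hx => p1w x (le_sup_left (a := Z2) hx)
  have p13 : ∀ x ∈ Z3, p1 x = 0 := fun x hx => p1w x (le_sup_right (a := Z2) hx)
  have p21 : ∀ x ∈ Z1, p2 x = 0 := fun x hx => p2w x (le_sup_left (a := Z1) hx)
  have p23 : ∀ x ∈ Z3, p2 x = 0 := fun x hx => p2w x (le_sup_right (a := Z1) hx)
  have p31 : ∀ x ∈ Z1, p3 x = 0 := fun x hx => p3w x (le_sup_left (a := Z1) hx)
  have p32 : ∀ x ∈ Z2, p3 x = 0 := fun x hx => p3w x (le_sup_right (a := Z1) hx)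
  have dec : ∀ x ∈ V1, p1 x ∈ Z1 ∧ p2 x ∈ Z2 ∧ p3 x ∈ Z3 ∧ p1 x + p2 x + p3 x = x := by
    intro x hx
    obtain ⟨y, hy, c, hc, rfl⟩ := Submodule.mem_sup.1 (hV1 hx)
    obtain ⟨a, ha, b, hb, rfl⟩ := Submodule.mem_sup.1 hy
    simp only [map_add, p11 a ha, p12 b hb, p13 c hc, p21 a ha, p22 b hb, p23 c hc,
      p31 a ha, p32 b hb, p33 c hc, add_zero, zero_add]
    exact ⟨ha, hb, hc, trivial⟩
  have q5 : ∀ x ∈ V5, p1 x = 0 ∧ p2 x + p3 x = x := by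
    intro x hx
    obtain ⟨b, hb, c, hc, rfl⟩ := Submodule.mem_sup.1 (hV5 hx)
    simp [p12 b hb, p13 c hc, p22 b hb, p23 c hc, p32 b hb, p33 c hc]
  have q4 : ∀ x ∈ V4, p2 x = 0 ∧ p1 x + p3 x = x := by
    intro x hx
    obtain ⟨b, hb, c, hc, rfl⟩ := Submodule.mem_sup.1 (hV4 hx)
    simp [p11 b hb, p13 c hc, p21 b hb, p23 c hc, p31 b hb, p33 c hc]
  have q3 : ∀ x ∈ V3, p3 x = 0 ∧ p1 x + p2 x = x := by
    intro x hx
    obtain ⟨b, hb, c, hc, rfl⟩ := Submodule.mem_sup.1 (hV3 hx)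
    simp [p11 b hb, p12 c hc, p21 b hb, p22 c hc, p31 b hb, p32 c hc]
  obtain ⟨A1, hA1⟩ : ∃ A, A = V1 ⊓ V5.comap (p2 + p3) := ⟨_, rfl⟩
  obtain ⟨A2, hA2⟩ : ∃ A, A = V1 ⊓ V4.comap (p1 + p3) := ⟨_, rfl⟩
  obtain ⟨A3, hA3⟩ : ∃ A, A = V1 ⊓ V3.comap (p1 + p2) := ⟨_, rfl⟩
  have m1 : ∀ x, x ∈ A1 ↔ x ∈ V1 ∧ p2 x + p3 x ∈ V5 := fun x => by rw [hA1]; rfl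
  have m2 : ∀ x, x ∈ A2 ↔ x ∈ V1 ∧ p1 x + p3 x ∈ V4 := fun x => by rw [hA2]; rfl
  have m3 : ∀ x, x ∈ A3 ↔ x ∈ V1 ∧ p1 x + p2 x ∈ V3 := fun x => by rw [hA3]; rfl
  clear hA1 hA2 hA3
  have l1 : A1 ≤ V1 := fun x hx => ((m1 x).1 hx).1
  have l2 : A2 ≤ V1 := fun x hx => ((m2 x).1 hx).1
  have l3 : A3 ≤ V1 := fun x hx => ((m3 x).1 hx).1
  -- each `A i` projects onto `Z i`
  have s1 : Z1 ≤ A1.map p1 := by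
    intro z hz
    obtain ⟨v, hv, w, hw, rfl⟩ := Submodule.mem_sup.1 (hZ1 hz)
    have h2 := p21 _ hz
    have h3 := p31 _ hz
    have h1 := p11 _ hz
    rw [map_add] at h1 h2 h3
    refine ⟨v, (m1 v).2 ⟨hv, ?_⟩, ?_⟩
    · rw [eq_neg_of_add_eq_zero_left h2, eq_neg_of_add_eq_zero_left h3, ← neg_add, (q5 w hw).2]
      exact neg_mem hw
    · rw [(q5 w hw).1, add_zero] at h1; exact h1
  have s2 : Z2 ≤ A2.map p2 := by
    intro z hz
    obtain ⟨v, hv, w, hw, rfl⟩ := Submodule.mem_sup.1 (hZ2 hz)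
    have h2 := p12 _ hz
    have h3 := p32 _ hz
    have h1 := p22 _ hz
    rw [map_add] at h1 h2 h3
    refine ⟨v, (m2 v).2 ⟨hv, ?_⟩, ?_⟩
    · rw [eq_neg_of_add_eq_zero_left h2, eq_neg_of_add_eq_zero_left h3, ← neg_add, (q4 w hw).2]
      exact neg_mem hw
    · rw [(q4 w hw).1, add_zero] at h1; exact h1
  have s3 : Z3 ≤ A3.map p3 := by
    intro z hz
    obtain ⟨v, hv, w, hw, rfl⟩ := Submodule.mem_sup.1 (hZ3 hz)
    have h2 := p13 _ hz
    have h3 := p23 _ hz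
    have h1 := p33 _ hz
    rw [map_add] at h1 h2 h3
    refine ⟨v, (m3 v).2 ⟨hv, ?_⟩, ?_⟩
    · rw [eq_neg_of_add_eq_zero_left h2, eq_neg_of_add_eq_zero_left h3, ← neg_add, (q3 w hw).2]
      exact neg_mem hw
    · rw [(q3 w hw).1, add_zero] at h1; exact h1
  have d1 := (Submodule.finrank_mono s1).trans (Submodule.finrank_map_le p1 A1)
  have d2 := (Submodule.finrank_mono s2).trans (Submodule.finrank_map_le p2 A2)
  have d3 := (Submodule.finrank_mono s3).trans (Submodule.finrank_map_le p3 A3)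
  have t1 := Submodule.finrank_mono (s1.trans (Submodule.map_mono l1))
  have t2 := Submodule.finrank_mono (s2.trans (Submodule.map_mono l2))
  have i1 := Submodule.finrank_sup_add_finrank_inf_eq A2 A3
  have i2 := Submodule.finrank_sup_add_finrank_inf_eq A1 (A2 ⊓ A3)
  have r1 := dfz_map_mono p1 (A2 ⊔ A3) V1 (sup_le l2 l3)
  have r2 := dfz_map_mono p2 (A1 ⊔ A2 ⊓ A3) V1 (sup_le l1 (inf_le_left.trans l2))
  -- the upper bound on the dimension of `V3 + V4 + V5`
  have j1 := Submodule.finrank_sup_add_finrank_inf_eq V3 V4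
  have j2 := Submodule.finrank_sup_add_finrank_inf_eq (V3 ⊔ V4) V5
  have rD := dfz_rank_nullity (p2 + p3) (A1 ⊓ (A2 ⊓ A3))
  have k1 : (A1 ⊓ (A2 ⊓ A3)).map (p2 + p3) ≤ (V3 ⊔ V4) ⊓ V5 := by
    rintro _ ⟨x, ⟨hx1, hx2, hx3⟩, rfl⟩
    have h1 := ((m1 x).1 hx1).2
    have h2 := ((m2 x).1 hx2).2
    have h3 := ((m3 x).1 hx3).2
    refine ⟨?_, h1⟩
    have : (p2 + p3) x = (p1 x + p2 x) + (p1 x + p3 x) := by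
      have h := hneg (p1 x)
      calc (p2 + p3) x = (p1 x + p1 x) + (p2 x + p3 x) := by rw [h, zero_add]; rfl
        _ = _ := by abel
    rw [this]
    exact Submodule.add_mem_sup h3 h2
  have k2 : (A1 ⊓ (A2 ⊓ A3)) ⊓ LinearMap.ker (p2 + p3) ≤ V3 ⊓ V4 := by
    rintro x ⟨⟨hx1, hx2, hx3⟩, hk⟩
    have hk' : p2 x + p3 x = 0 := hk
    have h2 := ((m2 x).1 hx2).2
    have h3 := ((m3 x).1 hx3).2
    obtain ⟨z1, z2, z3, -⟩ := dec x (l1 hx1)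
    have e2 : p2 x = 0 := by
      have := congrArg p2 hk'
      rwa [map_add, p22 _ z2, p23 _ z3, add_zero, map_zero] at this
    have e3 : p3 x = 0 := by rwa [e2, zero_add] at hk'
    have e := (dec x (l1 hx1)).2.2.2
    rw [e2, e3, add_zero, add_zero] at e
    rw [e2, e, add_zero] at h3
    rw [e3, e, add_zero] at h2
    exact ⟨h3, h2⟩
  have k1' := Submodule.finrank_mono k1
  have k2' := Submodule.finrank_mono k2
  -- the lower bound on the image
  have rP := dfz_rank_nullity (p1 + p2) (V3 ⊔ V4 ⊔ V5)
  have rP' := dfz_rank_nullity p1 ((V3 ⊔ V4 ⊔ V5).map (p1 + p2))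
  have w3 : V3 ≤ V3 ⊔ V4 ⊔ V5 := le_sup_left.trans le_sup_left
  have w4 : V4 ≤ V3 ⊔ V4 ⊔ V5 := le_sup_right.trans le_sup_left
  have w5 : V5 ≤ V3 ⊔ V4 ⊔ V5 := le_sup_right
  have f1 : (V3 ⊔ V4 ⊔ V5) ⊓ Z3 ≤ (V3 ⊔ V4 ⊔ V5) ⊓ LinearMap.ker (p1 + p2) := by
    refine inf_le_inf_left _ fun x hx => ?_
    rw [LinearMap.mem_ker, LinearMap.add_apply, p13 x hx, p23 x hx, add_zero]
  have f2 : (A2 ⊔ A3).map p1 ≤ ((V3 ⊔ V4 ⊔ V5).map (p1 + p2)).map p1 := by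
    rw [Submodule.map_le_iff_le_comap]
    refine sup_le (fun x hx => ?_) (fun x hx => ?_)
    · obtain ⟨z1, z2, z3, -⟩ := dec x (l2 hx)
      refine ⟨_, ⟨_, w4 ((m2 x).1 hx).2, rfl⟩, ?_⟩
      simp [p11 _ z1, p13 _ z3, p21 _ z1, p23 _ z3]
    · obtain ⟨z1, z2, z3, -⟩ := dec x (l3 hx)
      refine ⟨_, ⟨_, w3 ((m3 x).1 hx).2, rfl⟩, ?_⟩
      simp [p11 _ z1, p12 _ z2, p21 _ z1, p22 _ z2]
  have f3 : (A1 ⊔ A2 ⊓ A3).map p2 ≤ (V3 ⊔ V4 ⊔ V5).map (p1 + p2) ⊓ LinearMap.ker p1 := by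
    rw [Submodule.map_le_iff_le_comap]
    refine sup_le (fun x hx => ?_) (fun x hx => ?_)
    · obtain ⟨z1, z2, z3, -⟩ := dec x (l1 hx)
      refine ⟨⟨_, w5 ((m1 x).1 hx).2, ?_⟩, p12 _ z2⟩
      simp [p12 _ z2, p13 _ z3, p22 _ z2, p23 _ z3]
    · obtain ⟨z1, z2, z3, -⟩ := dec x (l2 hx.1)
      refine ⟨⟨_, sub_mem (w3 ((m3 x).1 hx.2).2) (w4 ((m2 x).1 hx.1).2), ?_⟩, p12 _ z2⟩
      simp [p11 _ z1, p12 _ z2, p13 _ z3, p21 _ z1, p22 _ z2, p23 _ z3]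
  have f1' := Submodule.finrank_mono f1
  have f2' := Submodule.finrank_mono f2
  have f3' := Submodule.finrank_mono f3
  omega

end aux

/-- Dougherty–Freiling–Zeger, second network: for subspaces
`Z_1, …, Z_5, V_1, …, V_8` over a finite field of characteristic 2 satisfying the
listed independence and containment conditions,
`min(dim Z_i) / max(dim V_j) ≤ 10/11`, i.e.
`11·min(dim Z_1, …, dim Z_5) ≤ 10·max(dim V_1, …, dim V_8)`. -/
theorem dfz_second_network {K M : Type} [Field K] [Fintype K] [CharP K 2]
    [AddCommGroup M] [Module K M] [FiniteDimensional K M]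
    (Z1 Z2 Z3 Z4 Z5 V1 V2 V3 V4 V5 V6 V7 V8 : Submodule K M)
    (hind : finrank K ↥(Z1 ⊔ Z2 ⊔ Z3 ⊔ Z4 ⊔ Z5)
      = finrank K ↥Z1 + finrank K ↥Z2 + finrank K ↥Z3 + finrank K ↥Z4 + finrank K ↥Z5)
    (hV1 : V1 ≤ Z1 ⊔ Z2 ⊔ Z3) (hV2 : V2 ≤ Z3 ⊔ Z4 ⊔ Z5)
    (hV3 : V3 ≤ Z1 ⊔ Z2) (hV4 : V4 ≤ Z1 ⊔ Z3) (hV5 : V5 ≤ Z2 ⊔ Z3)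
    (hV6 : V6 ≤ Z3 ⊔ Z4) (hV7 : V7 ≤ Z3 ⊔ Z5) (hV8 : V8 ≤ Z4 ⊔ Z5)
    (hZ1 : Z1 ≤ V1 ⊔ V5) (hZ2 : Z2 ≤ V1 ⊔ V4) (hZ3a : Z3 ≤ V1 ⊔ V3)
    (hZ3b : Z3 ≤ V3 ⊔ V4 ⊔ V5 ⊔ V6 ⊔ V7 ⊔ V8) (hZ3c : Z3 ≤ V2 ⊔ V8)
    (hZ4 : Z4 ≤ V2 ⊔ V7) (hZ5 : Z5 ≤ V2 ⊔ V6) :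
    11 * min (min (min (min (finrank K ↥Z1) (finrank K ↥Z2)) (finrank K ↥Z3))
          (finrank K ↥Z4)) (finrank K ↥Z5)
      ≤ 10 * max (max (max (max (max (max (max (finrank K ↥V1) (finrank K ↥V2))
          (finrank K ↥V3)) (finrank K ↥V4)) (finrank K ↥V5)) (finrank K ↥V6))
          (finrank K ↥V7)) (finrank K ↥V8) := by
  have e12 := Submodule.finrank_add_le_finrank_add_finrank Z1 Z2
  have e123 := Submodule.finrank_add_le_finrank_add_finrank (Z1 ⊔ Z2) Z3
  have e1234 := Submodule.finrank_add_le_finrank_add_finrank (Z1 ⊔ Z2 ⊔ Z3) Z4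
  have e12345 := Submodule.finrank_add_le_finrank_add_finrank (Z1 ⊔ Z2 ⊔ Z3 ⊔ Z4) Z5
  have e45 := Submodule.finrank_add_le_finrank_add_finrank Z4 Z5
  have e453 := Submodule.finrank_add_le_finrank_add_finrank (Z4 ⊔ Z5) Z3
  have eq1 : Z1 ⊔ Z2 ⊔ Z3 ⊔ Z4 ⊔ Z5 = (Z1 ⊔ Z2) ⊔ (Z4 ⊔ Z5 ⊔ Z3) := by ac_rfl
  have eq2 : Z1 ⊔ Z2 ⊔ Z3 ⊔ Z4 ⊔ Z5 = (Z1 ⊔ Z2 ⊔ Z3) ⊔ (Z4 ⊔ Z5 ⊔ Z3) := by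
    rw [eq1, sup_assoc (Z1 ⊔ Z2) Z3, sup_eq_right.2 (le_sup_right : Z3 ≤ Z4 ⊔ Z5 ⊔ Z3)]
  have g1 := Submodule.finrank_add_le_finrank_add_finrank (Z1 ⊔ Z2) (Z4 ⊔ Z5 ⊔ Z3)
  rw [← eq1] at g1
  have g2 := Submodule.finrank_sup_add_finrank_inf_eq (Z1 ⊔ Z2 ⊔ Z3) (Z4 ⊔ Z5 ⊔ Z3)
  rw [← eq2] at g2
  have hP := dfz_half Z1 Z2 Z3 V1 V3 V4 V5 (by omega) hV1 hV3 hV4 hV5 hZ1 hZ2 hZ3a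
  have hQ := dfz_half Z4 Z5 Z3 V2 V8 V6 V7 (by omega)
    (hV2.trans (le_of_eq (by ac_rfl))) hV8 (hV6.trans (le_of_eq (by ac_rfl)))
    (hV7.trans (le_of_eq (by ac_rfl))) hZ4 hZ5 hZ3c
  have hinf : Z3 = (Z1 ⊔ Z2 ⊔ Z3) ⊓ (Z4 ⊔ Z5 ⊔ Z3) :=
    Submodule.eq_of_le_of_finrank_le (le_inf le_sup_right le_sup_right) (by omega)
  have lP : V3 ⊔ V4 ⊔ V5 ≤ Z1 ⊔ Z2 ⊔ Z3 :=
    sup_le (sup_le (hV3.trans le_sup_left)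
      (hV4.trans (sup_le (le_sup_left.trans le_sup_left) le_sup_right)))
      (hV5.trans (sup_le (le_sup_right.trans le_sup_left) le_sup_right))
  have lQ : V8 ⊔ V6 ⊔ V7 ≤ Z4 ⊔ Z5 ⊔ Z3 :=
    sup_le (sup_le (hV8.trans le_sup_left)
      (hV6.trans (sup_le le_sup_right (le_sup_left.trans le_sup_left))))
      (hV7.trans (sup_le le_sup_right (le_sup_right.trans le_sup_left)))
  have hsplit : Z3 ≤ (V3 ⊔ V4 ⊔ V5) ⊓ Z3 ⊔ (V8 ⊔ V6 ⊔ V7) ⊓ Z3 := by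
    intro z hz
    have hz' : z ∈ (V3 ⊔ V4 ⊔ V5) ⊔ (V8 ⊔ V6 ⊔ V7) :=
      (hZ3b.trans (le_of_eq (by ac_rfl))) hz
    obtain ⟨p, hp, q, hq, hpq⟩ := Submodule.mem_sup.1 hz'
    have hp3 : p ∈ Z3 := by
      rw [hinf]
      refine ⟨lP hp, ?_⟩
      rw [eq_sub_of_add_eq hpq]
      exact sub_mem (Submodule.mem_sup_right hz) (lQ hq)
    have hq3 : q ∈ Z3 := by
      rw [eq_sub_of_add_eq' hpq]
      exact sub_mem hz hp3
    rw [← hpq]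
    exact Submodule.add_mem_sup ⟨hp, hp3⟩ ⟨hq, hq3⟩
  have hs := (Submodule.finrank_mono hsplit).trans
    (Submodule.finrank_add_le_finrank_add_finrank _ _)
  have hmin : ∀ a b c d e : ℕ, min (min (min (min a b) c) d) e ≤ a ∧
      min (min (min (min a b) c) d) e ≤ b ∧ min (min (min (min a b) c) d) e ≤ c ∧
      min (min (min (min a b) c) d) e ≤ d ∧ min (min (min (min a b) c) d) e ≤ e := by
    intro a b c d e
    simp
  have hmax : ∀ a b c d e f g h m : ℕ,
      max (max (max (max (max (max (max a b) c) d) e) f) g) h = m →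
      a ≤ m ∧ b ≤ m ∧ c ≤ m ∧ d ≤ m ∧ e ≤ m ∧ f ≤ m ∧ g ≤ m ∧ h ≤ m := by
    rintro a b c d e f g h m rfl
    simp
  obtain ⟨n1, n2, n3, n4, n5⟩ := hmin (finrank K ↥Z1) (finrank K ↥Z2) (finrank K ↥Z3)
    (finrank K ↥Z4) (finrank K ↥Z5)
  obtain ⟨x1, x2, x3, x4, x5, x6, x7, x8⟩ := hmax (finrank K ↥V1) (finrank K ↥V2)
    (finrank K ↥V3) (finrank K ↥V4) (finrank K ↥V5) (finrank K ↥V6) (finrank K ↥V7)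
    (finrank K ↥V8) _ rfl
  clear hind e12 e123 e1234 e12345 e45 e453 g1 g2
  linarith
end
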